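/- For all positive integers dA, dB and every integer r with 1 ≤ r < min(dA,dB), and every density matrix ρ on ℂ^{dA}⊗ℂ^{dB} (indexed by Fin dA × Fin dB) with Schmidt number strictly greater than r, there exist a finite index set X × Y, density matrices ξ^x on ℂ^{dA} and ζ^y on ℂ^{dB}, and real coefficients γ_{x,y}, such that, defining for any matrix ρ' indexed by Fin dA × Fin dB and any effects M (indexed by Fin dA × Fin dA) and N (indexed by Fin dB × Fin dB) the payoff J(ρ'; M, N) = Σ_{x,y} γ_{x,y} · Tr[(M ⊗ N) · e((ξ^x)ᵀ ⊗ ρ' ⊗ (ζ^y)ᵀ)], the following hold: (i) J(σ; M, N) ≥ 0 for every pair of effects M, N and every density matrix σ with Schmidt number at most r; (ii) there exist effects M, N with J(ρ; M, N) < 0. -/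

import Mathlib

open Matrix
open scoped Kronecker ComplexOrder

/-- The Schmidt rank of a bipartite vector `ψ : m × n → ℂ`, i.e. the rank of the
matrix `C_ψ` with `(C_ψ)_{ij} = ψ (i, j)`. -/
noncomputable def schmidtRank {m n : Type*} [Fintype m] [Fintype n] (ψ : m × n → ℂ) : ℕ :=
  (Matrix.of fun i j => ψ (i, j)).rank

/-- A matrix `ρ` indexed by `m × n` has Schmidt number at most `r` if it can be written
as `∑_k ψ_k ψ_k†` with each `ψ_k` of Schmidt rank at most `r`. -/
def SchmidtNumberLE {m n : Type*} [Fintype m] [Fintype n]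
    (ρ : Matrix (m × n) (m × n) ℂ) (r : ℕ) : Prop :=
  ∃ (k : ℕ) (ψ : Fin k → m × n → ℂ),
    (∀ i, schmidtRank (ψ i) ≤ r) ∧
    ρ = ∑ i, Matrix.vecMulVec (ψ i) (star (ψ i))

/-- The Schmidt number: the least `r` such that `SchmidtNumberLE ρ r`. -/
noncomputable def schmidtNumber {m n : Type*} [Fintype m] [Fintype n]
    (ρ : Matrix (m × n) (m × n) ℂ) : ℕ :=
  sInf {r | SchmidtNumberLE ρ r}

/-- A density matrix: positive semidefinite with unit trace. -/
def IsDensityMatrix {n : Type*} [Fintype n] (ρ : Matrix n n ℂ) : Prop :=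
  ρ.PosSemidef ∧ ρ.trace = 1

/-- An effect: a Hermitian matrix `M` with `0 ≤ M ≤ I`. -/
def IsEffect {n : Type*} [Fintype n] [DecidableEq n] (M : Matrix n n ℂ) : Prop :=
  M.PosSemidef ∧ (1 - M).PosSemidef

/-- The maximally entangled unit vector `|Φ⁺_d⟩ = (1/√d) ∑ᵢ e_{(i,i)}`. -/
noncomputable def maxEnt (d : ℕ) : Fin d × Fin d → ℂ :=
  fun p => if p.1 = p.2 then ((1 / Real.sqrt d : ℝ) : ℂ) else 0

/-- The projector `P_d = |Φ⁺_d⟩⟨Φ⁺_d|`. -/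
noncomputable def projME (d : ℕ) : Matrix (Fin d × Fin d) (Fin d × Fin d) ℂ :=
  Matrix.vecMulVec (maxEnt d) (star (maxEnt d))

/-- The isotropic state `ρ^iso_d(p) = p P_d + (1−p) I/d²`. -/
noncomputable def isoState (d : ℕ) (p : ℝ) : Matrix (Fin d × Fin d) (Fin d × Fin d) ℂ :=
  (p : ℂ) • projME d + (((1 - p) / (d ^ 2 : ℝ) : ℝ) : ℂ) • 1

/-- `|φ₂⁺⟩ = (1/√2)(e_{(0,0)} + e_{(1,1)}) ∈ ℂ⁸⊗ℂ⁸`. -/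
noncomputable def phi2 : Fin 8 × Fin 8 → ℂ :=
  fun q => if q = (0, 0) ∨ q = (1, 1) then ((1 / Real.sqrt 2 : ℝ) : ℂ) else 0

/-- `ρ̃(λ) = λ ρ^iso₈(0.24) + (1−λ)|φ₂⁺⟩⟨φ₂⁺|`. -/
noncomputable def rhoTilde (l : ℝ) : Matrix (Fin 8 × Fin 8) (Fin 8 × Fin 8) ℂ :=
  (l : ℂ) • isoState 8 0.24 + ((1 - l : ℝ) : ℂ) • Matrix.vecMulVec phi2 (star phi2)

/-- Reindexing `(i₀, ((i,j), j₀)) ↦ ((i₀, i), (j, j₀))`. -/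
def eIdx (dA dB : ℕ) :
    (Fin dA × ((Fin dA × Fin dB) × Fin dB)) ≃ (Fin dA × Fin dA) × (Fin dB × Fin dB) where
  toFun x := ((x.1, x.2.1.1), (x.2.1.2, x.2.2))
  invFun x := (x.1.1, ((x.1.2, x.2.1), x.2.2))
  left_inv x := rfl
  right_inv x := rfl

/-- The average payoff `J(ρ'; M, N) = ∑_{x,y} γ_{x,y} Tr[(M ⊗ N) · e((ξ^x)ᵀ ⊗ ρ' ⊗ (ζ^y)ᵀ)]`. -/
noncomputable def payoff {dA dB X Y : ℕ} (γ : Fin X → Fin Y → ℝ)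
    (ξ : Fin X → Matrix (Fin dA) (Fin dA) ℂ) (ζ : Fin Y → Matrix (Fin dB) (Fin dB) ℂ)
    (ρ' : Matrix (Fin dA × Fin dB) (Fin dA × Fin dB) ℂ)
    (M : Matrix (Fin dA × Fin dA) (Fin dA × Fin dA) ℂ)
    (N : Matrix (Fin dB × Fin dB) (Fin dB × Fin dB) ℂ) : ℂ :=
  ∑ x, ∑ y, (γ x y : ℂ) *
    Matrix.trace ((M ⊗ₖ N) *
      Matrix.reindex (eIdx dA dB) (eIdx dA dB) ((ξ x)ᵀ ⊗ₖ (ρ' ⊗ₖ (ζ y)ᵀ)))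

/-!
By conic Carathéodory, an operator of Schmidt number at most `r` is `A * Aᴴ` for a matrix `A` with
a fixed number of columns, each of Schmidt rank at most `r`. Such `A` form a closed set and
`A ↦ A * Aᴴ` is proper, so the operators of Schmidt number at most `r` form a closed convex cone.
Separating `ρ` from this cone yields a Hermitian `W` with `Tr (W ρ) < 0` and `Tr (W σ) ≥ 0` on the
cone. Density matrices span all matrices, hence `W = ∑ γ_i ξ_i ⊗ ζ_i` with `γ_i` real, and these
are the data of the game. Its payoff is `Tr (W σ')`, where `σ'` arises from `σ` by local filtering
determined by `M` and `N`, which cannot raise Schmidt ranks; so the payoff is nonnegative on the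
cone. Projecting onto maximally entangled vectors gives `ρ' = ρ / (dA dB)` and a negative payoff.
-/

section Caratheodory

theorem sum_mem_convexHull_of_smul_mem {E ι : Type*} [AddCommGroup E] [Module ℝ E] [Fintype ι]
    {s : Set E} (h0 : 0 ∈ s) (hs : ∀ c : ℝ, 0 < c → ∀ ⦃x⦄, x ∈ s → c • x ∈ s)
    {z : ι → E} (hz : ∀ i, z i ∈ s) : ∑ i, z i ∈ convexHull ℝ s := by
  cases isEmpty_or_nonempty ι
  · simpa using subset_convexHull ℝ s h0
  have hcard : (0 : ℝ) < Fintype.card ι := by exact_mod_cast Fintype.card_pos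
  have havg : ∑ i, z i = ∑ i, (Fintype.card ι : ℝ)⁻¹ • (Fintype.card ι : ℝ) • z i := by
    simp only [smul_smul, inv_mul_cancel₀ hcard.ne', one_smul]
  rw [havg]
  refine (convex_convexHull ℝ s).sum_mem (fun _ _ ↦ by positivity) ?_
    fun i _ ↦ subset_convexHull ℝ s (hs _ hcard (hz i))
  simp [hcard.ne']

theorem exists_fin_sum_eq_of_smul_mem {E ι : Type*} [AddCommGroup E] [Module ℝ E]
    [FiniteDimensional ℝ E] [Fintype ι] {s : Set E} (h0 : 0 ∈ s)
    (hs : ∀ c : ℝ, 0 < c → ∀ ⦃x⦄, x ∈ s → c • x ∈ s) {z : ι → E} (hz : ∀ i, z i ∈ s) :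
    ∃ y : Fin (Module.finrank ℝ E + 1) → E, (∀ j, y j ∈ s) ∧ ∑ j, y j = ∑ i, z i := by
  obtain ⟨κ, _, x, w, hx, hindep, hw, -, hsum⟩ :=
    eq_pos_convex_span_of_mem_convexHull (sum_mem_convexHull_of_smul_mem h0 hs hz)
  have hcard : Fintype.card κ ≤ Fintype.card (Fin (Module.finrank ℝ E + 1)) := by
    simpa using hindep.card_le_finrank_succ.trans
      (Nat.succ_le_succ (Submodule.finrank_le (vectorSpan ℝ (Set.range x))))
  obtain ⟨e⟩ := Function.Embedding.nonempty_of_card_le hcard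
  refine ⟨Function.extend e (fun k ↦ w k • x k) 0, fun j ↦ ?_, ?_⟩
  · by_cases hj : ∃ k, e k = j
    · obtain ⟨k, rfl⟩ := hj
      rw [e.injective.extend_apply]
      exact hs _ (hw k) (hx ⟨k, rfl⟩)
    · rwa [Function.extend_apply' _ _ _ hj]
  · rw [← hsum]
    refine (Fintype.sum_of_injective e e.injective _ _ (fun j hj ↦ ?_) fun k ↦ ?_).symm
    · exact Function.extend_apply' _ _ _ hj
    · exact (e.injective.extend_apply (fun k ↦ w k • x k) _ k).symm

end Caratheodory

section ProperMap

open Filter Bornology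
open scoped Matrix.Norms.L2Operator

theorem isProperMap_mul_conjTranspose (𝕜 m n : Type*) [RCLike 𝕜] [Finite m] [Fintype n] :
    IsProperMap fun A : Matrix m n 𝕜 ↦ A * Aᴴ := by
  classical
  have := Fintype.ofFinite m
  have hcont : Continuous fun A : Matrix m n 𝕜 ↦ A * Aᴴ :=
    continuous_id.matrix_mul continuous_id.matrix_conjTranspose
  have hnorm (A : Matrix m n 𝕜) : ‖A * Aᴴ‖ = ‖A‖ * ‖A‖ := by
    simpa [l2_opNorm_conjTranspose] using l2_opNorm_conjTranspose_mul_self Aᴴ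
  have : ProperSpace (Matrix m n 𝕜) := FiniteDimensional.proper 𝕜 _
  rw [isProperMap_iff_tendsto_cocompact]
  refine ⟨hcont, ?_⟩
  have : ProperSpace (Matrix m m 𝕜) := FiniteDimensional.proper 𝕜 _
  rw [← Metric.cobounded_eq_cocompact, ← Metric.cobounded_eq_cocompact,
    ← tendsto_norm_atTop_iff_cobounded]
  simp only [hnorm]
  exact tendsto_norm_cobounded_atTop.atTop_mul_atTop₀ tendsto_norm_cobounded_atTop

end ProperMap

theorem isClosed_setOf_rank_le (𝕜 m n : Type*) [NontriviallyNormedField 𝕜]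
    [CompleteSpace 𝕜] [Finite m] [Fintype n] (r : ℕ) :
    IsClosed {A : Matrix m n 𝕜 | A.rank ≤ r} := by
  classical
  have := Fintype.ofFinite m
  let toCLM : Matrix m n 𝕜 →ₗ[𝕜] ((n → 𝕜) →L[𝕜] (m → 𝕜)) :=
    LinearMap.toContinuousLinearMap.toLinearMap ∘ₗ Matrix.toLin'.toLinearMap
  have hrank (A : Matrix m n 𝕜) : (toCLM A : (n → 𝕜) →ₗ[𝕜] (m → 𝕜)).rank = A.rank :=
    (Module.finrank_eq_rank 𝕜 _).symm
  have hset : {A : Matrix m n 𝕜 | A.rank ≤ r} =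
      (toCLM ⁻¹' {T | ((r + 1 : ℕ) : Cardinal) ≤ (T : (n → 𝕜) →ₗ[𝕜] (m → 𝕜)).rank})ᶜ := by
    ext A
    simp only [Set.mem_ofPred_eq, Set.mem_compl_iff, Set.mem_preimage, hrank, Nat.cast_le]
    omega
  rw [hset, isClosed_compl_iff]
  exact (isOpen_setOfPred_nat_le_rank (r + 1)).preimage toCLM.continuous_of_finiteDimensional

section SchmidtCone

variable {m n : Type*} [Fintype m] [Fintype n] {r : ℕ}

theorem isClosed_setOf_schmidtRank_le (m n : Type*) [Fintype m] [Fintype n] (r : ℕ) :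
    IsClosed {ψ : m × n → ℂ | schmidtRank ψ ≤ r} :=
  (isClosed_setOf_rank_le ℂ m n r).preimage
    (f := fun ψ : m × n → ℂ ↦ Matrix.of fun i j ↦ ψ (i, j)) (by fun_prop)

@[simp]
theorem schmidtRank_zero : schmidtRank (0 : m × n → ℂ) = 0 :=
  rank_zero

theorem schmidtRank_smul_le (c : ℂ) (ψ : m × n → ℂ) : schmidtRank (c • ψ) ≤ schmidtRank ψ := by
  classical
  simpa [schmidtRank] using!
    rank_mul_le_right (c • (1 : Matrix m m ℂ)) (Matrix.of fun i j ↦ ψ (i, j))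

theorem smul_vecMulVec_star {ι : Type*} {a : ℝ} (ha : 0 ≤ a) (ψ : ι → ℂ) :
    a • vecMulVec ψ (star ψ) = vecMulVec ((√a : ℂ) • ψ) (star ((√a : ℂ) • ψ)) := by
  have hsq : (√a : ℂ) * √a = a := by rw [← Complex.ofReal_mul, Real.mul_self_sqrt ha]
  rw [star_smul, smul_vecMulVec, vecMulVec_smul, smul_smul, Complex.star_def, Complex.conj_ofReal,
    hsq, Complex.coe_smul]

theorem mul_conjTranspose_eq_sum_vecMulVec {R ι κ : Type*} [NonUnitalNonAssocSemiring R] [Star R]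
    [Fintype κ] (A : Matrix ι κ R) :
    A * Aᴴ = ∑ k, vecMulVec (A.col k) (star (A.col k)) := by
  ext i j
  simp [mul_apply, Matrix.sum_apply, vecMulVec_apply]

theorem SchmidtNumberLE.zero : SchmidtNumberLE (0 : Matrix (m × n) (m × n) ℂ) r :=
  ⟨0, Fin.elim0, fun i ↦ i.elim0, by simp⟩

theorem SchmidtNumberLE.add {ρ σ : Matrix (m × n) (m × n) ℂ}
    (hρ : SchmidtNumberLE ρ r) (hσ : SchmidtNumberLE σ r) : SchmidtNumberLE (ρ + σ) r := by
  obtain ⟨k, ψ, hψ, rfl⟩ := hρ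
  obtain ⟨l, φ, hφ, rfl⟩ := hσ
  refine ⟨k + l, Fin.append ψ φ, fun i ↦ ?_, by simp [Fin.sum_univ_add]⟩
  induction i using Fin.addCases <;> simp [hψ, hφ]

theorem SchmidtNumberLE.smul {ρ : Matrix (m × n) (m × n) ℂ} {a : ℝ}
    (hρ : SchmidtNumberLE ρ r) (ha : 0 ≤ a) : SchmidtNumberLE (a • ρ) r := by
  obtain ⟨k, ψ, hψ, rfl⟩ := hρ
  refine ⟨k, fun i ↦ (√a : ℂ) • ψ i, fun i ↦ (schmidtRank_smul_le _ _).trans (hψ i), ?_⟩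
  simp only [Finset.smul_sum, smul_vecMulVec_star ha]

theorem schmidtNumberLE_vecMulVec {ψ : m × n → ℂ} (hψ : schmidtRank ψ ≤ r) :
    SchmidtNumberLE (vecMulVec ψ (star ψ)) r :=
  ⟨1, fun _ ↦ ψ, fun _ ↦ hψ, by simp⟩

theorem schmidtNumberLE_iff_exists_mul_conjTranspose {ρ : Matrix (m × n) (m × n) ℂ} :
    SchmidtNumberLE ρ r ↔
      ∃ A : Matrix (m × n) (Fin (Module.finrank ℝ (Matrix (m × n) (m × n) ℂ) + 1)) ℂ,
        (∀ j, schmidtRank (A.col j) ≤ r) ∧ A * Aᴴ = ρ := by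
  constructor
  · rintro ⟨k, ψ, hψ, rfl⟩
    let dyads : Set (Matrix (m × n) (m × n) ℂ) :=
      {x | ∃ φ : m × n → ℂ, schmidtRank φ ≤ r ∧ vecMulVec φ (star φ) = x}
    have hzero : 0 ∈ dyads := ⟨0, by simp, by simp⟩
    have hsmul (c : ℝ) (hc : 0 < c) : ∀ ⦃x⦄, x ∈ dyads → c • x ∈ dyads := by
      rintro _ ⟨φ, hφ, rfl⟩
      exact ⟨_, (schmidtRank_smul_le _ φ).trans hφ, (smul_vecMulVec_star hc.le φ).symm⟩
    obtain ⟨y, hy, hsum⟩ := exists_fin_sum_eq_of_smul_mem hzero hsmul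
      fun i ↦ ⟨ψ i, hψ i, rfl⟩
    choose φ hφ hφy using hy
    refine ⟨Matrix.of fun p j ↦ φ j p, hφ, ?_⟩
    rw [mul_conjTranspose_eq_sum_vecMulVec, ← hsum]
    exact Finset.sum_congr rfl fun j _ ↦ hφy j
  · rintro ⟨A, hA, rfl⟩
    exact ⟨_, A.col, hA, mul_conjTranspose_eq_sum_vecMulVec A⟩

theorem isClosed_setOf_schmidtNumberLE (m n : Type*) [Fintype m] [Fintype n] (r : ℕ) :
    IsClosed {ρ : Matrix (m × n) (m × n) ℂ | SchmidtNumberLE ρ r} := by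
  have hcols (κ : Type) : IsClosed {A : Matrix (m × n) κ ℂ | ∀ j, schmidtRank (A.col j) ≤ r} := by
    rw [Set.ofPred_forall]
    exact isClosed_iInter fun j ↦ (isClosed_setOf_schmidtRank_le m n r).preimage
      (f := fun A : Matrix (m × n) κ ℂ ↦ A.col j) (by unfold Matrix.col; fun_prop)
  simpa only [schmidtNumberLE_iff_exists_mul_conjTranspose] using!
    (isProperMap_mul_conjTranspose ℂ _ _).isClosedMap _ (hcols _)

/-- The closed convex cone of operators of Schmidt number at most `r`. -/
def schmidtCone (m n : Type*) [Fintype m] [Fintype n] (r : ℕ) :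
    ProperCone ℝ (Matrix (m × n) (m × n) ℂ) where
  carrier := {ρ | SchmidtNumberLE ρ r}
  add_mem' := SchmidtNumberLE.add
  zero_mem' := .zero
  smul_mem' a _ hρ := hρ.smul a.2
  isClosed' := isClosed_setOf_schmidtNumberLE m n r

theorem SchmidtNumberLE.posSemidef {ρ : Matrix (m × n) (m × n) ℂ} (hρ : SchmidtNumberLE ρ r) :
    ρ.PosSemidef := by
  obtain ⟨k, ψ, -, rfl⟩ := hρ
  exact posSemidef_sum _ fun i _ ↦ posSemidef_vecMulVec_self_star _

end SchmidtCone

section TracePairing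

variable {ι : Type*} [Fintype ι]

theorem exists_forall_eq_trace_mul {R κ : Type*} [CommSemiring R] [Fintype κ]
    (f : Matrix ι κ R →ₗ[R] R) : ∃ A : Matrix κ ι R, ∀ T, f T = trace (A * T) := by
  classical
  refine ⟨Matrix.of fun j i ↦ f (single i j 1), fun T ↦ ?_⟩
  have hf : f = traceLinearMap κ R R ∘ₗ
      mulLeftLinearMap κ R (Matrix.of fun j i ↦ f (single i j 1)) := by
    refine ext_linearMap _ fun i j ↦ LinearMap.ext_ring ?_
    simp [trace_mul_single]
  exact LinearMap.congr_fun hf T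

theorem exists_isHermitian_forall_trace_mul_eq (f : Matrix ι ι ℂ →ₗ[ℝ] ℝ) :
    ∃ W : Matrix ι ι ℂ, W.IsHermitian ∧ ∀ T : Matrix ι ι ℂ, T.IsHermitian →
      trace (W * T) = f T := by
  obtain ⟨A, hA⟩ := exists_forall_eq_trace_mul (Module.Dual.extendRCLike (𝕜 := ℂ) f)
  refine ⟨(2⁻¹ : ℝ) • (A + Aᴴ), ?_, fun T hT ↦ ?_⟩
  · exact (isHermitian_add_transpose_self A).smul (IsSelfAdjoint.all _)
  · have hconj : trace (Aᴴ * T) = star (trace (A * T)) := by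
      rw [← trace_conjTranspose, conjTranspose_mul, hT.eq, trace_mul_comm]
    have hre : f T = (trace (A * T)).re := by
      rw [← hA]
      exact (Module.Dual.re_extendRCLike_apply (𝕜 := ℂ) f T).symm
    rw [smul_mul_assoc, add_mul, trace_smul, trace_add, hconj, hre]
    simp [Complex.add_conj]

end TracePairing

section Witness

variable {m n : Type*} [Fintype m] [Fintype n] {r : ℕ}

/-- A Hermitian operator `W` is a witness of Schmidt number above `r` if its expectation value
`Tr (W σ)` is nonnegative on every `σ` of Schmidt number at most `r`, so that a negative value
certifies a larger Schmidt number. -/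
structure IsSchmidtWitness (W : Matrix (m × n) (m × n) ℂ) (r : ℕ) : Prop where
  isHermitian : W.IsHermitian
  trace_mul_nonneg : ∀ ⦃σ⦄, SchmidtNumberLE σ r → 0 ≤ trace (W * σ)

open scoped Matrix.Norms.L2Operator in
theorem exists_isSchmidtWitness_trace_mul_neg {ρ : Matrix (m × n) (m × n) ℂ}
    (hρ : ρ.IsHermitian) (hr : ¬ SchmidtNumberLE ρ r) :
    ∃ W, IsSchmidtWitness W r ∧ trace (W * ρ) < 0 := by
  classical
  obtain ⟨f, hf_nonneg, hf_neg⟩ :=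
    (schmidtCone m n r).hyperplane_separation_point (x₀ := ρ) hr
  obtain ⟨W, hW, hWf⟩ := exists_isHermitian_forall_trace_mul_eq f.toLinearMap
  refine ⟨W, ⟨hW, fun σ hσ ↦ ?_⟩, ?_⟩
  · rw [hWf σ hσ.posSemidef.isHermitian]
    exact Complex.zero_le_real.2 (hf_nonneg σ hσ)
  · rw [hWf ρ hρ]
    exact_mod_cast hf_neg

end Witness

section DensityMatrices

open scoped MatrixOrder Matrix.Norms.L2Operator in
theorem span_setOf_isDensityMatrix (n : Type*) [Fintype n] :
    Submodule.span ℂ {D : Matrix n n ℂ | IsDensityMatrix D} = ⊤ := by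
  classical
  rw [eq_top_iff, ← CStarAlgebra.span_nonneg (A := Matrix n n ℂ), Submodule.span_le]
  intro P hP
  replace hP : P.PosSemidef := nonneg_iff_posSemidef.1 hP
  by_cases htrace : P.trace = 0
  · rw [hP.trace_eq_zero_iff.1 htrace]
    exact Submodule.zero_mem _
  · have hnormalized : IsDensityMatrix (P.trace⁻¹ • P) :=
      ⟨hP.smul (inv_nonneg.2 hP.trace_nonneg), by simp [htrace]⟩
    rw [← smul_inv_smul₀ htrace P]
    exact Submodule.smul_mem _ _ (Submodule.subset_span hnormalized)

theorem span_image2_kronecker {R l m n p : Type*} [CommSemiring R] [Finite l] [Finite m]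
    [Finite n] [Finite p] {s : Set (Matrix l m R)} {t : Set (Matrix n p R)}
    (hs : Submodule.span R s = ⊤) (ht : Submodule.span R t = ⊤) :
    Submodule.span R (Set.image2 (· ⊗ₖ ·) s t) = ⊤ := by
  classical
  have := Fintype.ofFinite l
  have := Fintype.ofFinite m
  have := Fintype.ofFinite n
  have := Fintype.ofFinite p
  have hmap : Submodule.span R (Set.image2 (· ⊗ₖ ·) s t) =
      Submodule.map₂ (kroneckerBilinear (R := R)) ⊤ ⊤ := by
    rw [← hs, ← ht, Submodule.map₂_span_span]
    rfl
  refine eq_top_iff.2 fun A _ ↦ ?_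
  rw [hmap, matrix_eq_sum_single A]
  refine Submodule.sum_mem _ fun i _ ↦ Submodule.sum_mem _ fun j _ ↦ ?_
  have hsingle : single i j (A i j) = single i.1 j.1 (A i j) ⊗ₖ single i.2 j.2 1 := by
    simp [single_kronecker_single]
  rw [hsingle]
  exact Submodule.apply_mem_map₂ _ Submodule.mem_top Submodule.mem_top

theorem eq_sum_re_smul_of_isHermitian {ι κ : Type*} [Fintype κ] {W : Matrix ι ι ℂ}
    (hW : W.IsHermitian) {c : κ → ℂ} {B : κ → Matrix ι ι ℂ} (hB : ∀ k, (B k).IsHermitian)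
    (h : W = ∑ k, c k • B k) : W = ∑ k, ((c k).re : ℂ) • B k := by
  have hconj : W = ∑ k, star (c k) • B k := by
    rw [← hW.eq, h, conjTranspose_sum]
    simp only [conjTranspose_smul, (hB _).eq]
  calc
    W = (2⁻¹ : ℂ) • (W + W) := by rw [← two_smul ℂ W, inv_smul_smul₀ two_ne_zero]
    _ = (2⁻¹ : ℂ) • ∑ k, (c k + star (c k)) • B k := by
      nth_rw 1 [h, hconj]
      simp only [add_smul, Finset.sum_add_distrib]
    _ = ∑ k, ((c k).re : ℂ) • B k := by
      simp [Finset.smul_sum, smul_smul, Complex.add_conj]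

theorem exists_eq_sum_smul_kronecker_isDensityMatrix {m n : Type*} [Fintype m] [Fintype n]
    {W : Matrix (m × n) (m × n) ℂ} (hW : W.IsHermitian) :
    ∃ (k : ℕ) (γ : Fin k → ℝ) (ξ : Fin k → Matrix m m ℂ) (ζ : Fin k → Matrix n n ℂ),
      (∀ i, IsDensityMatrix (ξ i)) ∧ (∀ i, IsDensityMatrix (ζ i)) ∧
        W = ∑ i, (γ i : ℂ) • (ξ i ⊗ₖ ζ i) := by
  have hmem : W ∈ Submodule.span ℂ (Set.image2 (· ⊗ₖ ·)
      {D : Matrix m m ℂ | IsDensityMatrix D} {D : Matrix n n ℂ | IsDensityMatrix D}) := by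
    rw [span_image2_kronecker (span_setOf_isDensityMatrix m) (span_setOf_isDensityMatrix n)]
    exact Submodule.mem_top
  obtain ⟨k, c, B, hsum⟩ := Submodule.mem_span_set'.1 hmem
  choose ξ hξ ζ hζ hB using fun i ↦ (B i).2
  refine ⟨k, fun i ↦ (c i).re, ξ, ζ, hξ, hζ, eq_sum_re_smul_of_isHermitian hW (fun i ↦ ?_) ?_⟩
  · exact ((hξ i).1.kronecker (hζ i).1).isHermitian
  · simpa only [hB] using hsum.symm

end DensityMatrices

section LocalFiltering

variable {m m' n n' : Type*} [Fintype m] [Fintype n]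

/-- The unnormalized operator left on the input spaces `ℂ^{m'} ⊗ ℂ^{n'}` once the measurement
outcomes `M` and `N` are observed on the shared operator `ρ`, that is
`(Tr_{mn} [(M ⊗ N) (1 ⊗ ρ ⊗ 1)])ᵀ`. The payoff is its pairing with the game operator
`∑ γ_{x,y} ξ^x ⊗ ζ^y`; the overall transpose absorbs those on the inputs. -/
def filteredOperator (M : Matrix (m' × m) (m' × m) ℂ) (N : Matrix (n × n') (n × n') ℂ)
    (ρ : Matrix (m × n) (m × n) ℂ) : Matrix (m' × n') (m' × n') ℂ :=
  Matrix.of fun p q ↦ ∑ i, ∑ j,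
    M (q.1, i.1) (p.1, j.1) * N (i.2, q.2) (j.2, p.2) * ρ j i

theorem filteredOperator_sum {α β δ : Type*} [Fintype α] [Fintype β] [Fintype δ]
    (M : α → Matrix (m' × m) (m' × m) ℂ) (N : β → Matrix (n × n') (n × n') ℂ)
    (ρ : δ → Matrix (m × n) (m × n) ℂ) :
    filteredOperator (∑ a, M a) (∑ b, N b) (∑ d, ρ d) =
      ∑ a, ∑ b, ∑ d, filteredOperator (M a) (N b) (ρ d) := by
  ext p q
  simp only [filteredOperator, of_apply, Matrix.sum_apply]
  calc
    _ = ∑ x : (m × n) × (m × n), ∑ a, ∑ b, ∑ d,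
          M a (q.1, x.1.1) (p.1, x.2.1) * N b (x.1.2, q.2) (x.2.2, p.2) * ρ d x.2 x.1 := by
      simp only [← Finset.mul_sum, ← Finset.sum_mul, Fintype.sum_prod_type (α₁ := m × n)]
    _ = ∑ a, ∑ b, ∑ d, ∑ x : (m × n) × (m × n),
          M a (q.1, x.1.1) (p.1, x.2.1) * N b (x.1.2, q.2) (x.2.2, p.2) * ρ d x.2 x.1 := by
      rw [Finset.sum_comm]
      refine Finset.sum_congr rfl fun a _ ↦ ?_
      rw [Finset.sum_comm]
      exact Finset.sum_congr rfl fun b _ ↦ Finset.sum_comm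
    _ = _ := by simp only [Fintype.sum_prod_type (α₁ := m × n)]

/-- The vector with coefficient matrix `U̅ C V̅`, where `U`, `C` and `V` are the coefficient
matrices of `u`, `ψ` and `v`: the image of `ψ` under the local filters given by `u` and `v`. -/
def filteredVector (u : m' × m → ℂ) (v : n × n' → ℂ) (ψ : m × n → ℂ) : m' × n' → ℂ :=
  fun p ↦ (Matrix.of (fun a b ↦ star (u (a, b))) * Matrix.of (fun i j ↦ ψ (i, j)) *
    Matrix.of (fun a b ↦ star (v (a, b)))) p.1 p.2

theorem schmidtRank_filteredVector_le [Fintype m'] [Fintype n'] (u : m' × m → ℂ)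
    (v : n × n' → ℂ) (ψ : m × n → ℂ) : schmidtRank (filteredVector u v ψ) ≤ schmidtRank ψ :=
  (rank_mul_le_left _ _).trans (rank_mul_le_right _ _)

theorem filteredOperator_vecMulVec (u : m' × m → ℂ) (v : n × n' → ℂ) (ψ : m × n → ℂ) :
    filteredOperator (vecMulVec u (star u)) (vecMulVec v (star v)) (vecMulVec ψ (star ψ)) =
      vecMulVec (filteredVector u v ψ) (star (filteredVector u v ψ)) := by
  have hvec (p : m' × n') : filteredVector u v ψ p =
      ∑ j : m × n, star (u (p.1, j.1)) * ψ j * star (v (j.2, p.2)) := by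
    simp only [filteredVector, mul_apply, of_apply, Finset.sum_mul, Fintype.sum_prod_type]
    exact Finset.sum_comm
  ext p q
  simp only [filteredOperator, of_apply, vecMulVec_apply, Pi.star_apply, hvec, star_sum, star_mul,
    star_star, Finset.sum_mul_sum]
  rw [Finset.sum_comm]
  exact Finset.sum_congr rfl fun i _ ↦ Finset.sum_congr rfl fun j _ ↦ by ring

theorem SchmidtNumberLE.filteredOperator [Fintype m'] [Fintype n'] {r : ℕ}
    {ρ : Matrix (m × n) (m × n) ℂ} (hρ : SchmidtNumberLE ρ r) {M : Matrix (m' × m) (m' × m) ℂ}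
    (hM : M.PosSemidef) {N : Matrix (n × n') (n × n') ℂ} (hN : N.PosSemidef) :
    SchmidtNumberLE (filteredOperator M N ρ) r := by
  obtain ⟨k, ψ, hψ, rfl⟩ := hρ
  obtain ⟨_, u, rfl⟩ := posSemidef_iff_eq_sum_vecMulVec.1 hM
  obtain ⟨_, v, rfl⟩ := posSemidef_iff_eq_sum_vecMulVec.1 hN
  simp only [filteredOperator_sum, filteredOperator_vecMulVec]
  refine sum_mem (S := schmidtCone m' n' r) fun a _ ↦ sum_mem fun b _ ↦ sum_mem fun i _ ↦ ?_
  exact schmidtNumberLE_vecMulVec ((schmidtRank_filteredVector_le _ _ _).trans (hψ i))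

end LocalFiltering

section Payoff

variable {dA dB : ℕ}

theorem trace_kronecker_mul_reindex_eIdx (M : Matrix (Fin dA × Fin dA) (Fin dA × Fin dA) ℂ)
    (N : Matrix (Fin dB × Fin dB) (Fin dB × Fin dB) ℂ)
    (ρ : Matrix (Fin dA × Fin dB) (Fin dA × Fin dB) ℂ)
    (ξ : Matrix (Fin dA) (Fin dA) ℂ) (ζ : Matrix (Fin dB) (Fin dB) ℂ) :
    trace ((M ⊗ₖ N) * reindex (eIdx dA dB) (eIdx dA dB) (ξᵀ ⊗ₖ (ρ ⊗ₖ ζᵀ))) =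
      trace ((ξ ⊗ₖ ζ) * filteredOperator M N ρ) := by
  let regroup : (Fin dA × Fin dB) × (Fin dA × Fin dB) ≃ (Fin dA × Fin dA) × (Fin dB × Fin dB) :=
    (Equiv.prodProdProdComm _ _ _ _).trans ((Equiv.refl _).prodCongr (Equiv.prodComm _ _))
  have hsum (g : (Fin dA × Fin dA) × (Fin dB × Fin dB) → ℂ) :
      ∑ x, g x = ∑ p : Fin dA × Fin dB, ∑ i : Fin dA × Fin dB, g ((p.1, i.1), (i.2, p.2)) := by
    rw [← regroup.sum_comp, Fintype.sum_prod_type]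
    rfl
  simp only [trace, diag, mul_apply, hsum, filteredOperator, of_apply, Finset.mul_sum]
  refine Finset.sum_congr rfl fun p _ ↦ ?_
  rw [Finset.sum_comm]
  refine Finset.sum_congr rfl fun q _ ↦ Finset.sum_congr rfl fun i _ ↦
    Finset.sum_congr rfl fun j _ ↦ ?_
  simp only [eIdx, reindex_apply, submatrix_apply, kroneckerMap_apply, transpose_apply,
    Equiv.coe_fn_symm_mk]
  ring

theorem payoff_eq_trace_mul_filteredOperator {X Y : ℕ} (γ : Fin X → Fin Y → ℝ)
    (ξ : Fin X → Matrix (Fin dA) (Fin dA) ℂ) (ζ : Fin Y → Matrix (Fin dB) (Fin dB) ℂ)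
    (ρ : Matrix (Fin dA × Fin dB) (Fin dA × Fin dB) ℂ)
    (M : Matrix (Fin dA × Fin dA) (Fin dA × Fin dA) ℂ)
    (N : Matrix (Fin dB × Fin dB) (Fin dB × Fin dB) ℂ) :
    payoff γ ξ ζ ρ M N =
      trace ((∑ x, ∑ y, (γ x y : ℂ) • (ξ x ⊗ₖ ζ y)) * filteredOperator M N ρ) := by
  simp only [payoff, trace_kronecker_mul_reindex_eIdx, Finset.sum_mul, trace_sum, smul_mul_assoc,
    trace_smul, smul_eq_mul]

end Payoff

section MaximallyEntangled

open scoped MatrixOrder in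
theorem isEffect_of_isStarProjection {n : Type*} [Fintype n] [DecidableEq n] {P : Matrix n n ℂ}
    (hP : IsStarProjection P) : IsEffect P :=
  ⟨nonneg_iff_posSemidef.1 hP.nonneg, nonneg_iff_posSemidef.1 hP.one_sub_nonneg⟩

theorem isStarProjection_vecMulVec_star {n : Type*} [Fintype n] {φ : n → ℂ}
    (hφ : star φ ⬝ᵥ φ = 1) : IsStarProjection (vecMulVec φ (star φ)) where
  isIdempotentElem := by
    rw [IsIdempotentElem, vecMulVec_mul_vecMulVec, hφ, one_smul]
  isSelfAdjoint := (posSemidef_vecMulVec_self_star φ).isHermitian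

theorem projME_apply (d : ℕ) (i j k l : Fin d) :
    projME d (i, j) (k, l) = if i = j ∧ k = l then (d : ℂ)⁻¹ else 0 := by
  have hsq : ((√d : ℂ))⁻¹ * (√d : ℂ)⁻¹ = (d : ℂ)⁻¹ := by
    rw [← mul_inv, ← Complex.ofReal_mul, Real.mul_self_sqrt d.cast_nonneg, Complex.ofReal_natCast]
  by_cases hij : i = j <;> by_cases hkl : k = l <;>
    simp [projME, maxEnt, vecMulVec_apply, hij, hkl, hsq]

theorem star_maxEnt_dotProduct_maxEnt {d : ℕ} (hd : 0 < d) : star (maxEnt d) ⬝ᵥ maxEnt d = 1 := by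
  have hd' : (d : ℂ) ≠ 0 := by exact_mod_cast hd.ne'
  calc
    star (maxEnt d) ⬝ᵥ maxEnt d = trace (projME d) := by
      rw [projME, trace_vecMulVec, dotProduct_comm]
    _ = 1 := by simp [trace, Fintype.sum_prod_type, projME_apply, hd']

theorem isEffect_projME {d : ℕ} (hd : 0 < d) : IsEffect (projME d) :=
  isEffect_of_isStarProjection
    (isStarProjection_vecMulVec_star (star_maxEnt_dotProduct_maxEnt hd))

theorem filteredOperator_projME {dA dB : ℕ} (ρ : Matrix (Fin dA × Fin dB) (Fin dA × Fin dB) ℂ) :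
    filteredOperator (projME dA) (projME dB) ρ = ((dA : ℂ)⁻¹ * (dB : ℂ)⁻¹) • ρ := by
  ext p q
  simp [filteredOperator, projME_apply, Fintype.sum_prod_type, ite_and]

end MaximallyEntangled

/-- Theorem 2, MDI Schmidt number certification: for every density matrix
`ρ` with Schmidt number strictly greater than `r there is a semiquantum nonlocal game,
built from trusted quantum inputs `ξ^x, ζ^y` and real coefficients `γ_{x,y}`, whose payoff
is nonnegative on all states with Schmidt number at most `r` for all effects, but is
strictly negative on `ρ` for some pair of effects. -/
theorem mdi_schmidt_number_certification (dA dB : ℕ) (r : ℕ)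
    (hdA : 0 < dA) (hdB : 0 < dB) (hr1 : 1 ≤ r) (hr2 : r < min dA dB)
    (ρ : Matrix (Fin dA × Fin dB) (Fin dA × Fin dB) ℂ)
    (hρ : IsDensityMatrix ρ) (hSN : ¬ SchmidtNumberLE ρ r) :
    ∃ (X Y : ℕ) (ξ : Fin X → Matrix (Fin dA) (Fin dA) ℂ)
      (ζ : Fin Y → Matrix (Fin dB) (Fin dB) ℂ) (γ : Fin X → Fin Y → ℝ),
      (∀ x, IsDensityMatrix (ξ x)) ∧
      (∀ y, IsDensityMatrix (ζ y)) ∧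
      (∀ σ : Matrix (Fin dA × Fin dB) (Fin dA × Fin dB) ℂ,
        IsDensityMatrix σ → SchmidtNumberLE σ r →
        ∀ M N, IsEffect M → IsEffect N → 0 ≤ payoff γ ξ ζ σ M N) ∧
      (∃ M N, IsEffect M ∧ IsEffect N ∧ payoff γ ξ ζ ρ M N < 0) := by
  obtain ⟨W, hW, hWρ⟩ := exists_isSchmidtWitness_trace_mul_neg hρ.1.isHermitian hSN
  obtain ⟨k, γ, ξ, ζ, hξ, hζ, hWsum⟩ := exists_eq_sum_smul_kronecker_isDensityMatrix hW.isHermitian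
  have hpayoff (σ M N) : payoff (fun x y ↦ if x = y then γ x else 0) ξ ζ σ M N =
      trace (W * filteredOperator M N σ) := by
    rw [payoff_eq_trace_mul_filteredOperator, hWsum]
    simp [ite_smul]
  refine ⟨k, k, ξ, ζ, fun x y ↦ if x = y then γ x else 0, hξ, hζ, fun σ _ hσ M N hM hN ↦ ?_,
    projME dA, projME dB, isEffect_projME hdA, isEffect_projME hdB, ?_⟩
  · rw [hpayoff]
    exact hW.trace_mul_nonneg (hσ.filteredOperator hM.1 hN.1)
  · rw [hpayoff, filteredOperator_projME, Matrix.mul_smul, trace_smul, smul_eq_mul]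
    have hpos : (0 : ℂ) < (dA : ℂ)⁻¹ * (dB : ℂ)⁻¹ := by positivity
    exact mul_neg_of_pos_of_neg hpos hWρ
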